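/- Suppose there is exactly one leader l (δ_l > 0 and δ_i = 0 for all i ≠ l). Then the leader's FSN neighbor set is empty, every follower's FSN neighbor set is nonempty, and for every choice function σ assigning to each follower i one retained in-neighbor σ(i) with w̄_{i σ(i)} > 0, the graph T on V with edge set {(i, σ(i)) : i ≠ l} is a directed spanning tree with the leader l as its unique root: for every node i, iterating σ starting from i reaches l in finitely many steps, and l is the only node with no outgoing edge in T. -/

import Mathlib

open Matrix Polynomial Function

/-- The weighted digraph of `W` is strongly connected. -/
def StronglyConnected {n : ℕ} (W : Matrix (Fin n) (Fin n) ℝ) : Prop :=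
  ∀ i j : Fin n, Relation.ReflTransGen (fun a b => 0 < W a b) i j

/-- The in-degree matrix `D = diag(d₁, …, d_n)` with `d_i = ∑ j, w_ij`. -/
def degMat {n : ℕ} (W : Matrix (Fin n) (Fin n) ℝ) : Matrix (Fin n) (Fin n) ℝ :=
  Matrix.diagonal fun i => ∑ j, W i j

/-- The perturbed Laplacian `L_B = (D - W) + diag(δ)`. -/
def lapB {n : ℕ} (W : Matrix (Fin n) (Fin n) ℝ) (δ : Fin n → ℝ) :
    Matrix (Fin n) (Fin n) ℝ :=
  degMat W - W + Matrix.diagonal δ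

/-- The FSN adjacency matrix: `w̄_ij = w_ij` if `v_i > v_j`, else `0`. -/
noncomputable def fsn {n : ℕ} (W : Matrix (Fin n) (Fin n) ℝ) (v : Fin n → ℝ) :
    Matrix (Fin n) (Fin n) ℝ :=
  Matrix.of fun i j => if v j < v i then W i j else 0

/-! At a follower, the eigenvalue equation says that the Laplacian of `v` is `λ₁ v_i > 0`, i.e. that
`∑ j, w_ij (v_i - v_j) > 0`, so some in-neighbor of `i` has a smaller value of `v`. Hence the
minimum of `v` is at the leader, and the values of `v` strictly decrease along the edges of `T`
until the leader is reached. -/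

section Descent

variable {α β : Type*} [Preorder β]

theorem wellFounded_lt_onFun [Finite α] (f : α → β) : WellFounded ((· < ·) on f) :=
  letI : Preorder α := Preorder.lift f
  wellFounded_lt

variable {a : α}

theorem le_of_forall_ne_exists_lt {f : α → β} (hf : WellFounded ((· < ·) on f))
    (h : ∀ x, x ≠ a → ∃ y, f y < f x) (x : α) : f a ≤ f x := by
  induction x using hf.induction with
  | _ x ih =>
    obtain rfl | hx := eq_or_ne x a
    · exact le_rfl
    · obtain ⟨y, hyx⟩ := h x hx
      exact (ih y hyx).trans hyx.le

theorem exists_iterate_eq_of_wellFounded {r : α → α → Prop} (hr : WellFounded r) {σ : α → α}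
    (hσ : ∀ x, x ≠ a → r (σ x) x) (x : α) : ∃ p : ℕ, σ^[p] x = a := by
  induction x using hr.induction with
  | _ x ih =>
    obtain rfl | hx := eq_or_ne x a
    · exact ⟨0, rfl⟩
    · obtain ⟨p, hp⟩ := ih (σ x) (hσ x hx)
      exact ⟨p + 1, hp⟩

end Descent

theorem exists_pos_and_lt_of_sum_mul_sub_pos {ι R : Type*} [Ring R] [LinearOrder R]
    [IsStrictOrderedRing R] {s : Finset ι} {w f : ι → R} {c : R} (hw : ∀ j ∈ s, 0 ≤ w j)
    (h : 0 < ∑ j ∈ s, w j * (c - f j)) : ∃ j ∈ s, 0 < w j ∧ f j < c := by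
  obtain ⟨j, hj, hpos⟩ : ∃ j ∈ s, 0 < w j * (c - f j) := by
    contrapose! h
    exact Finset.sum_nonpos h
  have hlt : 0 < c - f j := pos_of_mul_pos_right hpos (hw j hj)
  exact ⟨j, hj, pos_of_mul_pos_left hpos hlt.le, sub_pos.mp hlt⟩

section Laplacian

variable {n : ℕ} (W : Matrix (Fin n) (Fin n) ℝ) (v : Fin n → ℝ) (i : Fin n)

theorem degMat_sub_mulVec_apply :
    ((degMat W - W) *ᵥ v) i = ∑ j, W i j * (v i - v j) := by
  rw [degMat, sub_mulVec, Pi.sub_apply, mulVec_diagonal]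
  simp only [mulVec, dotProduct, mul_sub, Finset.sum_sub_distrib, Finset.sum_mul]

theorem lapB_mulVec_apply (δ : Fin n → ℝ) :
    (lapB W δ *ᵥ v) i = ((degMat W - W) *ᵥ v) i + δ i * v i := by
  rw [lapB, add_mulVec, Pi.add_apply, mulVec_diagonal]

variable {W v i} {j : Fin n}

theorem fsn_pos_iff : 0 < fsn W v i j ↔ 0 < W i j ∧ v j < v i := by
  by_cases h : v j < v i <;> simp [fsn, h]

theorem fsn_eq_zero_of_le (h : v i ≤ v j) : fsn W v i j = 0 :=
  if_neg h.not_gt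

theorem exists_fsn_pos (hW : ∀ j, 0 ≤ W i j) (hpos : 0 < ((degMat W - W) *ᵥ v) i) :
    ∃ j, 0 < fsn W v i j := by
  rw [degMat_sub_mulVec_apply] at hpos
  obtain ⟨j, -, hj⟩ := exists_pos_and_lt_of_sum_mul_sub_pos (fun j _ => hW j) hpos
  exact ⟨j, fsn_pos_iff.mpr hj⟩

end Laplacian

theorem fsn_single_leader_spanning_tree_general
    {n : ℕ} (W : Matrix (Fin n) (Fin n) ℝ) (v : Fin n → ℝ) (l : Fin n)
    (hW : ∀ i, i ≠ l → ∀ j, 0 ≤ W i j)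
    (hpos : ∀ i, i ≠ l → 0 < ((degMat W - W) *ᵥ v) i) :
    (∀ j, fsn W v l j = 0) ∧
    (∀ i, i ≠ l → ∃ j, 0 < fsn W v i j) ∧
    (∀ σ : Fin n → Fin n, (∀ i, i ≠ l → 0 < fsn W v i (σ i)) →
      (∀ i : Fin n, ∃ p : ℕ, σ^[p] i = l) ∧
      (∀ j : Fin n, (∀ b : Fin n, ¬(j ≠ l ∧ b = σ j)) ↔ j = l)) := by
  have exists_retained : ∀ i, i ≠ l → ∃ j, 0 < fsn W v i j :=
    fun i hi => exists_fsn_pos (hW i hi) (hpos i hi)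
  have leader_le : ∀ j, v l ≤ v j :=
    le_of_forall_ne_exists_lt (wellFounded_lt_onFun v) fun i hi =>
      (exists_retained i hi).imp fun _ hj => (fsn_pos_iff.mp hj).2
  refine ⟨fun j => fsn_eq_zero_of_le (leader_le j), exists_retained, fun σ hσ => ⟨?_, ?_⟩⟩
  · exact exists_iterate_eq_of_wellFounded (wellFounded_lt_onFun v) fun i hi =>
      (fsn_pos_iff.mp (hσ i hi)).2
  · simp

/-- With exactly one leader `l`, the leader's FSN neighbor set is
empty, every follower's FSN neighbor set is nonempty, and for every choice function `σ`
selecting for each follower a retained in-neighbor, the graph `T` with edge set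
`{(i, σ i) : i ≠ l}` is a directed spanning tree rooted at `l`: iterating `σ` from any
node reaches `l` in finitely many steps, and `l` is the only node without an outgoing
edge in `T`. -/
theorem fsn_single_leader_spanning_tree
    {n : ℕ} (W : Matrix (Fin n) (Fin n) ℝ)
    (hWnonneg : ∀ i j, 0 ≤ W i j)
    (hconn : StronglyConnected W)
    (δ : Fin n → ℝ) (hδnonneg : ∀ i, 0 ≤ δ i)
    (lam1 : ℝ) (hlam1 : 0 < lam1)
    (v : Fin n → ℝ) (hv : ∀ i, 0 < v i)
    (hveig : lapB W δ *ᵥ v = lam1 • v)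
    (l : Fin n) (hl : 0 < δ l) (hfol : ∀ i, i ≠ l → δ i = 0) :
    (∀ j, fsn W v l j = 0) ∧
    (∀ i, i ≠ l → ∃ j, 0 < fsn W v i j) ∧
    (∀ σ : Fin n → Fin n, (∀ i, i ≠ l → 0 < fsn W v i (σ i)) →
      (∀ i : Fin n, ∃ p : ℕ, σ^[p] i = l) ∧
      (∀ j : Fin n, (∀ b : Fin n, ¬(j ≠ l ∧ b = σ j)) ↔ j = l)) := by
  refine fsn_single_leader_spanning_tree_general W v l (fun i _ => hWnonneg i) fun i hi => ?_
  simpa [lapB_mulVec_apply, hfol i hi] using (congrFun hveig i).trans_gt (mul_pos hlam1 (hv i))
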